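/- For every n ≥ 2, the group VP_n is generated by the set of cabled elements {a_{k,l}, b_{k,l} : k, l ≥ 1, 2 ≤ k+l ≤ n}. Moreover, for n ≥ 3 the elements a_{k,l}, b_{k,l} with k+l = n generate the subgroup T_{n−1} of VP_n defined as T_{n−1} = ⟨s_0(T_{n−2}), s_1(T_{n−2}), …, s_{n−2}(T_{n−2})⟩ with T_1 = VP_2 = ⟨λ_{1,2}, λ_{2,1}⟩, where the s_i are the degeneracy homomorphisms doubling the (i+1)-th strand. -/

import Mathlib

/-!
Write `A k j = λ_{1,j} ⋯ λ_{k,j}` and `B k j = λ_{j,k} ⋯ λ_{j,1}` for the factors of the cabled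
elements. Generation of `VP_n`: the quotient of the consecutive cabled elements `a_{k,l}` and
`a_{k,l-1}` is `A k (k+l)`, and the quotient of `A k j` and `A (k-1) j` is the single generator
`λ_{k,j}`; the `b`'s give the generators `λ_{j,k}` in the same way.

For the subgroups `T_m`, the point is that the degeneracies send cabled elements to cabled elements:
`s_i` sends `a_{k,l}` to `a_{k+1,l}` when the doubled strand is among the first `k` strands, and to
`a_{k,l+1}` when it is among the last `l`, and similarly for `b_{k,l}`. In the first case this is
immediate from the formulas; in the second, the factor `A k j` of the doubled strand `j` becomes
`∏_t λ_{t,j+1} λ_{t,j}`, which is `A k (j+1) * A k j` because `λ_{t,j}` and `λ_{t',j+1}` commute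
for `t ≠ t'`. Every `a_{k,l}` or `b_{k,l}` with `k + l ≥ 3` is such an image, so the statement
follows by induction, the case `T_1 = VP_2` being the first part for `n = 2`.
-/

namespace Paper

/-- Generators `λ_{i,j}`, `1 ≤ i ≠ j ≤ n` (here `0`-indexed: `i j : Fin n`, `i ≠ j`). -/
abbrev VPGen (n : ℕ) := {p : Fin n × Fin n // p.1 ≠ p.2}

/-- The generator `λ_{i,j}` as an element of the free group (junk value `1` if `i = j`). -/
def flam {n : ℕ} (i j : Fin n) : FreeGroup (VPGen n) :=
  if h : i ≠ j then FreeGroup.of ⟨(i, j), h⟩ else 1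

/-- The defining relations of the virtual pure braid group `VP_n`:
`λ_{i,j}λ_{k,l} = λ_{k,l}λ_{i,j}` and `λ_{k,i}λ_{k,j}λ_{i,j} = λ_{i,j}λ_{k,j}λ_{k,i}`,
where distinct letters stand for distinct indices. -/
def VPRels (n : ℕ) : Set (FreeGroup (VPGen n)) :=
  {r | (∃ i j k l : Fin n, i ≠ j ∧ k ≠ l ∧ i ≠ k ∧ i ≠ l ∧ j ≠ k ∧ j ≠ l ∧
          r = flam i j * flam k l * (flam k l * flam i j)⁻¹) ∨
       (∃ i j k : Fin n, i ≠ j ∧ k ≠ i ∧ k ≠ j ∧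
          r = flam k i * flam k j * flam i j * (flam i j * flam k j * flam k i)⁻¹)}

/-- The virtual pure braid group `VP_n`, given by its presentation. -/
abbrev VP (n : ℕ) := PresentedGroup (VPRels n)

/-- The generator `λ_{i,j}` as an element of `VP_n` (junk value `1` if `i = j`). -/
def glam {n : ℕ} (i j : Fin n) : VP n :=
  if h : i ≠ j then PresentedGroup.of ⟨(i, j), h⟩ else 1

/-- Conjugation `a^b = b⁻¹ * a * b`. -/
def cj {G : Type*} [Group G] (a b : G) : G := b⁻¹ * a * b

/-- Commutator `[a, b] = a⁻¹ * b⁻¹ * a * b`. -/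
def cm {G : Type*} [Group G] (a b : G) : G := a⁻¹ * b⁻¹ * a * b

/-- The defining formulas for the degeneracy homomorphisms `s_i : VP_n → VP_{n+1}`
(doubling the `(i+1)`-st strand), `0 ≤ i ≤ n-1`; here indices are `0`-based, so the
generator `λ_{k,l}` of the paper (with `1 ≤ k < l ≤ n`) is `glam k l` with
`k < l` in `Fin n`. -/
def IsDegen (S : ∀ n, ℕ → (VP n →* VP (n + 1))) : Prop :=
  ∀ (n i : ℕ), i < n → ∀ k l : Fin n, k < l →
    ((i < k.val → S n i (glam k l) = glam k.succ l.succ) ∧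
     (i = k.val → S n i (glam k l) = glam k.castSucc l.succ * glam k.succ l.succ) ∧
     (k.val < i → i < l.val → S n i (glam k l) = glam k.castSucc l.succ) ∧
     (i = l.val → S n i (glam k l) = glam k.castSucc l.succ * glam k.castSucc l.castSucc) ∧
     (l.val < i → S n i (glam k l) = glam k.castSucc l.castSucc)) ∧
    ((i < k.val → S n i (glam l k) = glam l.succ k.succ) ∧
     (i = k.val → S n i (glam l k) = glam l.succ k.succ * glam l.succ k.castSucc) ∧
     (k.val < i → i < l.val → S n i (glam l k) = glam l.succ k.castSucc) ∧
     (i = l.val → S n i (glam l k) = glam l.castSucc k.castSucc * glam l.succ k.castSucc) ∧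
     (l.val < i → S n i (glam l k) = glam l.castSucc k.castSucc))

/-- The defining formulas for the face homomorphisms `d_i : VP_{n+1} → VP_n`
(deleting the `(i+1)`-st strand), `0 ≤ i ≤ n`; `0`-based indices as in `IsDegen`. -/
def IsFace (D : ∀ n, ℕ → (VP (n + 1) →* VP n)) : Prop :=
  ∀ (n i : ℕ), i ≤ n →
    (∀ k l : Fin (n + 1), k < l →
      ((i = k.val → D n i (glam k l) = 1) ∧ (i = l.val → D n i (glam k l) = 1) ∧
       (i = k.val → D n i (glam l k) = 1) ∧ (i = l.val → D n i (glam l k) = 1))) ∧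
    (∀ k l : Fin n, k < l →
      ((i ≤ k.val →
          D n i (glam k.succ l.succ) = glam k l ∧ D n i (glam l.succ k.succ) = glam l k) ∧
       (k.val < i → i ≤ l.val →
          D n i (glam k.castSucc l.succ) = glam k l ∧
          D n i (glam l.succ k.castSucc) = glam l k) ∧
       (l.val < i →
          D n i (glam k.castSucc l.castSucc) = glam k l ∧
          D n i (glam l.castSucc k.castSucc) = glam l k)))

/-- The generator `λ_{i,j}` of `VP N` with `1`-based natural-number indices shifted to
`0`-based (junk value `1` out of range): `glamN N i j = λ_{i+1,j+1}`. -/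
def glamN (N i j : ℕ) : VP N :=
  if h : i < N ∧ j < N then glam ⟨i, h.1⟩ ⟨j, h.2⟩ else 1

/-- The cabled element `a_{k,l} ∈ VP_{k+l} ⊆ VP_N`, defined recursively by
`a_{1,1} = λ_{1,2}`, `a_{m-1,1} = λ_{1,m}λ_{2,m}⋯λ_{m-1,m}` and
`a_{k,l} = λ_{1,m}λ_{2,m}⋯λ_{k,m}·a_{k,l-1}` for `m = k + l`, `l ≥ 2`
(with `a_{k,0} = 1`; indices here are `0`-based so `λ_{t+1,m} = glamN N t (k+l-1)`). -/
def aElt (N k : ℕ) : ℕ → VP N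
  | 0 => 1
  | l + 1 => ((List.range k).map fun t => glamN N t (k + l)).prod * aElt N k l

/-- The cabled element `b_{k,l} ∈ VP_{k+l} ⊆ VP_N`, defined recursively by
`b_{1,1} = λ_{2,1}`, `b_{m-1,1} = λ_{m,m-1}λ_{m,m-2}⋯λ_{m,1}` and
`b_{k,l} = b_{k,l-1}·λ_{m,k}λ_{m,k-1}⋯λ_{m,1}` for `m = k + l`, `l ≥ 2`
(with `b_{k,0} = 1`). -/
def bElt (N k : ℕ) : ℕ → VP N
  | 0 => 1
  | l + 1 => bElt N k l * ((List.range k).reverse.map fun t => glamN N (k + l) t).prod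

/-- The subgroups `T_m ≤ VP_{m+1}`: `T_0 = 1`, `T_1 = VP_2`, and
`T_{n+1} = ⟨s_0(T_n), s_1(T_n), …, s_n(T_n)⟩`. -/
def Tsub (S : ∀ n, ℕ → (VP n →* VP (n + 1))) : (m : ℕ) → Subgroup (VP (m + 1))
  | 0 => ⊥
  | 1 => ⊤
  | m + 2 => ⨆ i ∈ Finset.range (m + 2), Subgroup.map (S (m + 2) i) (Tsub S (m + 1))

/-! ### Generators with natural-number indices -/

lemma glamN_eq {N i j : ℕ} (hi : i < N) (hj : j < N) :
    glamN N i j = glam ⟨i, hi⟩ ⟨j, hj⟩ := by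
  simp [glamN, hi, hj]

lemma glamN_commute {N i j k l : ℕ} (hi : i < N) (hj : j < N) (hk : k < N) (hl : l < N)
    (hij : i ≠ j) (hkl : k ≠ l) (hik : i ≠ k) (hil : i ≠ l) (hjk : j ≠ k) (hjl : j ≠ l) :
    Commute (glamN N i j) (glamN N k l) := by
  have h : PresentedGroup.mk (VPRels N)
      (flam ⟨i, hi⟩ ⟨j, hj⟩ * flam ⟨k, hk⟩ ⟨l, hl⟩ *
        (flam ⟨k, hk⟩ ⟨l, hl⟩ * flam ⟨i, hi⟩ ⟨j, hj⟩)⁻¹) = 1 := by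
    apply PresentedGroup.one_of_mem
    left
    refine ⟨⟨i, hi⟩, ⟨j, hj⟩, ⟨k, hk⟩, ⟨l, hl⟩, ?_, ?_, ?_, ?_, ?_, ?_, rfl⟩ <;>
      simpa [Fin.ext_iff]
  rw [map_mul, map_inv, mul_inv_eq_one] at h
  have hg : ∀ (a b : ℕ) (ha : a < N) (hb : b < N), a ≠ b →
      PresentedGroup.mk (VPRels N) (flam ⟨a, ha⟩ ⟨b, hb⟩) = glamN N a b := by
    intro a b ha hb hab
    simp [flam, glamN, glam, ha, hb, hab, PresentedGroup.of]
  simpa [Commute, SemiconjBy, hg _ _ hi hj hij, hg _ _ hk hl hkl] using h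

lemma S_up {S : ∀ n, ℕ → (VP n →* VP (n + 1))} (hS : IsDegen S)
    {n i t j : ℕ} (hi : i < n) (htj : t < j) (hj : j < n) :
    (i < t → S n i (glamN n t j) = glamN (n + 1) (t + 1) (j + 1)) ∧
    (i = t → S n i (glamN n t j) = glamN (n + 1) t (j + 1) * glamN (n + 1) (t + 1) (j + 1)) ∧
    (t < i → i < j → S n i (glamN n t j) = glamN (n + 1) t (j + 1)) ∧
    (i = j → S n i (glamN n t j) = glamN (n + 1) t (j + 1) * glamN (n + 1) t j) ∧
    (j < i → S n i (glamN n t j) = glamN (n + 1) t j) := by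
  have ht : t < n := htj.trans hj
  have h := (hS n i hi ⟨t, ht⟩ ⟨j, hj⟩ htj).1
  rw [glamN_eq ht hj, glamN_eq (by omega) (by omega), glamN_eq (by omega) (by omega),
    glamN_eq (by omega) (by omega)]
  exact h

lemma S_down {S : ∀ n, ℕ → (VP n →* VP (n + 1))} (hS : IsDegen S)
    {n i t j : ℕ} (hi : i < n) (htj : t < j) (hj : j < n) :
    (i < t → S n i (glamN n j t) = glamN (n + 1) (j + 1) (t + 1)) ∧
    (i = t → S n i (glamN n j t) = glamN (n + 1) (j + 1) (t + 1) * glamN (n + 1) (j + 1) t) ∧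
    (t < i → i < j → S n i (glamN n j t) = glamN (n + 1) (j + 1) t) ∧
    (i = j → S n i (glamN n j t) = glamN (n + 1) j t * glamN (n + 1) (j + 1) t) ∧
    (j < i → S n i (glamN n j t) = glamN (n + 1) j t) := by
  have ht : t < n := htj.trans hj
  have h := (hS n i hi ⟨t, ht⟩ ⟨j, hj⟩ htj).2
  rw [glamN_eq hj ht, glamN_eq (by omega) (by omega), glamN_eq (by omega) (by omega),
    glamN_eq (by omega) (by omega)]
  exact h

/-! ### The factors of the cabled elements -/

/-- The factor `λ_{1,j+1} ⋯ λ_{k,j+1}` of the cabled elements `a_{k,l}`, with `j` counted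
from `0`. -/
def colA (N k j : ℕ) : VP N := ((List.range k).map fun t => glamN N t j).prod

/-- The factor `λ_{j+1,k} ⋯ λ_{j+1,1}` of the cabled elements `b_{k,l}`, with `j` counted
from `0`. -/
def colB (N k j : ℕ) : VP N := ((List.range k).reverse.map fun t => glamN N j t).prod

@[simp] lemma colA_zero (N j : ℕ) : colA N 0 j = 1 := rfl

@[simp] lemma colB_zero (N j : ℕ) : colB N 0 j = 1 := rfl

lemma colA_succ (N k j : ℕ) : colA N (k + 1) j = colA N k j * glamN N k j := by
  simp [colA, List.range_succ]

lemma colB_succ (N k j : ℕ) : colB N (k + 1) j = glamN N j k * colB N k j := by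
  simp [colB, List.range_succ]

lemma aElt_succ (N k l : ℕ) : aElt N k (l + 1) = colA N k (k + l) * aElt N k l := rfl

lemma bElt_succ (N k l : ℕ) : bElt N k (l + 1) = bElt N k l * colB N k (k + l) := rfl

lemma colA_commute {N k c j p : ℕ} (hk : k ≤ c) (hcj : c < j) (hcp : c < p) (hjp : j ≠ p)
    (hj : j < N) (hp : p < N) : Commute (colA N k j) (glamN N c p) := by
  induction k with
  | zero => simp
  | succ k ih =>
    rw [colA_succ]
    exact (ih (by omega)).mul_left
      (glamN_commute (by omega) hj (by omega) hp (by omega) (by omega) (by omega) (by omega)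
        (by omega) hjp)

lemma colB_commute {N k c j p : ℕ} (hk : k ≤ c) (hcj : c < j) (hcp : c < p) (hjp : j ≠ p)
    (hj : j < N) (hp : p < N) : Commute (colB N k j) (glamN N p c) := by
  induction k with
  | zero => simp
  | succ k ih =>
    rw [colB_succ]
    exact Commute.mul_left
      (glamN_commute hj (by omega) hp (by omega) (by omega) (by omega) hjp (by omega)
        (by omega) (by omega)) (ih (by omega))

/-! ### Degeneracies of the cabled elements -/

lemma S_colA {S : ∀ n, ℕ → (VP n →* VP (n + 1))} (hS : IsDegen S)
    {n i k j : ℕ} (hi : i < n) (hkj : k ≤ j) (hj : j < n) :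
    (i < k → S n i (colA n k j) = colA (n + 1) (k + 1) (j + 1)) ∧
    (k ≤ i → i < j → S n i (colA n k j) = colA (n + 1) k (j + 1)) ∧
    (i = j → S n i (colA n k j) = colA (n + 1) k (j + 1) * colA (n + 1) k j) ∧
    (j < i → S n i (colA n k j) = colA (n + 1) k j) := by
  induction k with
  | zero => simp
  | succ k ih =>
    obtain ⟨h1, h2, h3, h4⟩ := ih (by omega)
    obtain ⟨g1, g2, g3, g4, g5⟩ := S_up hS (t := k) hi (by omega) hj
    refine ⟨fun h => ?_, fun h h' => ?_, fun h => ?_, fun h => ?_⟩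
    · rcases (by omega : i < k ∨ i = k) with hik | hik
      · rw [colA_succ, map_mul, h1 hik, g1 hik, colA_succ _ (k + 1)]
      · rw [colA_succ, map_mul, h2 hik.ge (by omega), g2 hik, colA_succ _ (k + 1),
          colA_succ, mul_assoc]
    · rw [colA_succ, map_mul, h2 (by omega) h', g3 (by omega) h', colA_succ]
    · have hc := colA_commute (N := n + 1) (le_refl k) (j := j) (p := j + 1) (by omega)
        (by omega) (by omega) (by omega) (by omega)
      rw [colA_succ, map_mul, h3 h, g4 h, colA_succ, colA_succ, mul_assoc,
        ← mul_assoc (colA _ k j), hc.eq]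
      simp only [mul_assoc]
    · rw [colA_succ, map_mul, h4 h, g5 h, colA_succ]

lemma S_colB {S : ∀ n, ℕ → (VP n →* VP (n + 1))} (hS : IsDegen S)
    {n i k j : ℕ} (hi : i < n) (hkj : k ≤ j) (hj : j < n) :
    (i < k → S n i (colB n k j) = colB (n + 1) (k + 1) (j + 1)) ∧
    (k ≤ i → i < j → S n i (colB n k j) = colB (n + 1) k (j + 1)) ∧
    (i = j → S n i (colB n k j) = colB (n + 1) k j * colB (n + 1) k (j + 1)) ∧
    (j < i → S n i (colB n k j) = colB (n + 1) k j) := by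
  induction k with
  | zero => simp
  | succ k ih =>
    obtain ⟨h1, h2, h3, h4⟩ := ih (by omega)
    obtain ⟨g1, g2, g3, g4, g5⟩ := S_down hS (t := k) hi (by omega) hj
    refine ⟨fun h => ?_, fun h h' => ?_, fun h => ?_, fun h => ?_⟩
    · rcases (by omega : i < k ∨ i = k) with hik | hik
      · rw [colB_succ, map_mul, h1 hik, g1 hik, colB_succ _ (k + 1)]
      · rw [colB_succ, map_mul, h2 hik.ge (by omega), g2 hik, colB_succ _ (k + 1),
          colB_succ, mul_assoc]
    · rw [colB_succ, map_mul, h2 (by omega) h', g3 (by omega) h', colB_succ]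
    · have hc := colB_commute (N := n + 1) (le_refl k) (j := j) (p := j + 1) (by omega)
        (by omega) (by omega) (by omega) (by omega)
      rw [colB_succ, map_mul, h3 h, g4 h, colB_succ, colB_succ, mul_assoc,
        ← mul_assoc (glamN _ (j + 1) k), ← hc.eq]
      simp only [mul_assoc]
    · rw [colB_succ, map_mul, h4 h, g5 h, colB_succ]

lemma S_aElt {S : ∀ n, ℕ → (VP n →* VP (n + 1))} (hS : IsDegen S)
    {n i k l : ℕ} (hi : i < n) (hkl : k + l ≤ n) :
    (i < k → S n i (aElt n k l) = aElt (n + 1) (k + 1) l) ∧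
    (k ≤ i → i < k + l → S n i (aElt n k l) = aElt (n + 1) k (l + 1)) ∧
    (k + l ≤ i → S n i (aElt n k l) = aElt (n + 1) k l) := by
  induction l with
  | zero => exact ⟨fun _ => map_one _, fun _ _ => by omega, fun _ => map_one _⟩
  | succ l ih =>
    obtain ⟨h1, h2, h3⟩ := ih (by omega)
    obtain ⟨g1, g2, g3, g4⟩ := S_colA hS (k := k) (j := k + l) hi (by omega) (by omega)
    refine ⟨fun h => ?_, fun h h' => ?_, fun h => ?_⟩
    · rw [aElt_succ, map_mul, h1 h, g1 h, aElt_succ, Nat.add_right_comm]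
    · rcases (by omega : i < k + l ∨ i = k + l) with hil | hil
      · rw [aElt_succ, map_mul, h2 h hil, g2 h hil, aElt_succ _ _ (l + 1), ← add_assoc]
      · rw [aElt_succ, map_mul, h3 hil.ge, g3 hil, aElt_succ _ _ (l + 1), aElt_succ,
          ← add_assoc, mul_assoc]
    · rw [aElt_succ, map_mul, h3 (by omega), g4 (by omega), aElt_succ]

lemma S_bElt {S : ∀ n, ℕ → (VP n →* VP (n + 1))} (hS : IsDegen S)
    {n i k l : ℕ} (hi : i < n) (hkl : k + l ≤ n) :
    (i < k → S n i (bElt n k l) = bElt (n + 1) (k + 1) l) ∧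
    (k ≤ i → i < k + l → S n i (bElt n k l) = bElt (n + 1) k (l + 1)) ∧
    (k + l ≤ i → S n i (bElt n k l) = bElt (n + 1) k l) := by
  induction l with
  | zero => exact ⟨fun _ => map_one _, fun _ _ => by omega, fun _ => map_one _⟩
  | succ l ih =>
    obtain ⟨h1, h2, h3⟩ := ih (by omega)
    obtain ⟨g1, g2, g3, g4⟩ := S_colB hS (k := k) (j := k + l) hi (by omega) (by omega)
    refine ⟨fun h => ?_, fun h h' => ?_, fun h => ?_⟩
    · rw [bElt_succ, map_mul, h1 h, g1 h, bElt_succ, Nat.add_right_comm]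
    · rcases (by omega : i < k + l ∨ i = k + l) with hil | hil
      · rw [bElt_succ, map_mul, h2 h hil, g2 h hil, bElt_succ _ _ (l + 1), ← add_assoc]
      · rw [bElt_succ, map_mul, h3 hil.ge, g3 hil, bElt_succ _ _ (l + 1), bElt_succ,
          ← add_assoc, mul_assoc]
    · rw [bElt_succ, map_mul, h3 (by omega), g4 (by omega), bElt_succ]

/-! ### Generation by cabled elements -/

lemma closure_cabled_eq_top (n : ℕ) :
    Subgroup.closure {x : VP n | ∃ k l : ℕ, 1 ≤ k ∧ 1 ≤ l ∧ k + l ≤ n ∧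
        (x = aElt n k l ∨ x = bElt n k l)} = ⊤ := by
  set H := Subgroup.closure {x : VP n | ∃ k l : ℕ, 1 ≤ k ∧ 1 ≤ l ∧ k + l ≤ n ∧
        (x = aElt n k l ∨ x = bElt n k l)} with hH
  have ha : ∀ k l, 1 ≤ k → k + l ≤ n → aElt n k l ∈ H := by
    rintro k (_ | l) hk hkl
    · exact H.one_mem
    · exact Subgroup.subset_closure ⟨k, l + 1, hk, by omega, hkl, Or.inl rfl⟩
  have hb : ∀ k l, 1 ≤ k → k + l ≤ n → bElt n k l ∈ H := by
    rintro k (_ | l) hk hkl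
    · exact H.one_mem
    · exact Subgroup.subset_closure ⟨k, l + 1, hk, by omega, hkl, Or.inr rfl⟩
  have hA : ∀ k j, k ≤ j → j < n → colA n k j ∈ H := by
    intro k j hkj hj
    obtain ⟨l, rfl⟩ := Nat.exists_eq_add_of_le hkj
    rcases Nat.eq_zero_or_pos k with rfl | hk
    · exact H.one_mem
    · rw [← H.mul_mem_cancel_right (ha k l hk hj.le), ← aElt_succ]
      exact ha k (l + 1) hk hj
  have hB : ∀ k j, k ≤ j → j < n → colB n k j ∈ H := by
    intro k j hkj hj
    obtain ⟨l, rfl⟩ := Nat.exists_eq_add_of_le hkj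
    rcases Nat.eq_zero_or_pos k with rfl | hk
    · exact H.one_mem
    · rw [← H.mul_mem_cancel_left (hb k l hk hj.le), ← bElt_succ]
      exact hb k (l + 1) hk hj
  rw [eq_top_iff, ← PresentedGroup.closure_range_of, Subgroup.closure_le]
  rintro _ ⟨⟨⟨⟨i, hi⟩, ⟨j, hj⟩⟩, hij⟩, rfl⟩
  have hij' : i ≠ j := by simpa using hij
  have hg : glamN n i j ∈ H := by
    rcases lt_or_gt_of_ne hij' with h | h
    · rw [← H.mul_mem_cancel_left (hA i j h.le hj), ← colA_succ]
      exact hA (i + 1) j h hj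
    · rw [← H.mul_mem_cancel_right (hB j i h.le hi), ← colB_succ]
      exact hB (j + 1) i h hi
  simpa [glamN, glam, hi, hj, hij'] using hg

/-- Stated from `T_1 = VP_2` onwards, so that the induction starts at the full group. -/
lemma Tsub_eq_closure {S : ∀ n, ℕ → (VP n →* VP (n + 1))} (hS : IsDegen S) (m : ℕ) :
    Tsub S (m + 1) = Subgroup.closure {x : VP (m + 2) | ∃ k l : ℕ, 1 ≤ k ∧ 1 ≤ l ∧
        k + l = m + 2 ∧ (x = aElt (m + 2) k l ∨ x = bElt (m + 2) k l)} := by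
  induction m with
  | zero =>
    change (⊤ : Subgroup (VP 2)) = _
    rw [← closure_cabled_eq_top 2]
    congr 1
    ext x
    constructor
    · rintro ⟨k, l, hk, hl, h, hx⟩
      exact ⟨k, l, hk, hl, by omega, hx⟩
    · rintro ⟨k, l, hk, hl, h, hx⟩
      exact ⟨k, l, hk, hl, h.le, hx⟩
  | succ m ih =>
    change ⨆ i ∈ Finset.range (m + 2), Subgroup.map (S (m + 2) i) (Tsub S (m + 1)) = _
    rw [ih]
    apply le_antisymm
    · refine iSup₂_le fun i hi => ?_
      have hi' : i < m + 2 := Finset.mem_range.mp hi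
      rw [MonoidHom.map_closure, Subgroup.closure_le]
      rintro _ ⟨x, ⟨k, l, hk, hl, hkl, hx⟩, rfl⟩
      apply Subgroup.subset_closure
      obtain ⟨a1, a2, -⟩ := S_aElt hS hi' hkl.le
      obtain ⟨b1, b2, -⟩ := S_bElt hS hi' hkl.le
      rcases lt_or_ge i k with hik | hik
      · refine ⟨k + 1, l, by omega, hl, by omega, ?_⟩
        rcases hx with rfl | rfl
        · exact Or.inl (a1 hik)
        · exact Or.inr (b1 hik)
      · refine ⟨k, l + 1, hk, by omega, by omega, ?_⟩
        rcases hx with rfl | rfl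
        · exact Or.inl (a2 hik (by omega))
        · exact Or.inr (b2 hik (by omega))
    · rw [Subgroup.closure_le]
      rintro x ⟨k, l, hk, hl, hkl, hx⟩
      -- Either `k ≥ 2`, and doubling the first strand works, or `l ≥ 2`, and the last one does.
      rcases Nat.lt_or_ge 1 k with h | h
      · obtain ⟨k, rfl⟩ : ∃ k', k = k' + 1 := ⟨k - 1, by omega⟩
        apply Subgroup.mem_iSup_of_mem 0
        apply Subgroup.mem_iSup_of_mem (Finset.mem_range.mpr (by omega))
        rcases hx with rfl | rfl
        · exact ⟨_, Subgroup.subset_closure ⟨k, l, by omega, hl, by omega, Or.inl rfl⟩,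
            (S_aElt hS (by omega) (by omega)).1 (by omega)⟩
        · exact ⟨_, Subgroup.subset_closure ⟨k, l, by omega, hl, by omega, Or.inr rfl⟩,
            (S_bElt hS (by omega) (by omega)).1 (by omega)⟩
      · obtain ⟨l, rfl⟩ : ∃ l', l = l' + 1 := ⟨l - 1, by omega⟩
        apply Subgroup.mem_iSup_of_mem (m + 1)
        apply Subgroup.mem_iSup_of_mem (Finset.mem_range.mpr (by omega))
        rcases hx with rfl | rfl
        · exact ⟨_, Subgroup.subset_closure ⟨k, l, hk, by omega, by omega, Or.inl rfl⟩,
            (S_aElt hS (by omega) (by omega)).2.1 (by omega) (by omega)⟩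
        · exact ⟨_, Subgroup.subset_closure ⟨k, l, hk, by omega, by omega, Or.inr rfl⟩,
            (S_bElt hS (by omega) (by omega)).2.1 (by omega) (by omega)⟩

/-- Proposition 3.2: for any family of degeneracy homomorphisms `s_i` (doubling strands),
(1) for `n ≥ 2` the group `VP_n` is generated by the cabled elements `a_{k,l}, b_{k,l}`
with `k, l ≥ 1`, `2 ≤ k + l ≤ n`; and (2) for `n = m + 1 ≥ 3` the subgroup
`T_{n-1} = T_m ≤ VP_n` equals the subgroup generated by the `a_{k,l}, b_{k,l}` with
`k + l = n`. -/
theorem statement1 (S : ∀ n, ℕ → (VP n →* VP (n + 1))) (hS : IsDegen S) :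
    (∀ n : ℕ, 2 ≤ n →
      Subgroup.closure {x : VP n | ∃ k l : ℕ, 1 ≤ k ∧ 1 ≤ l ∧ k + l ≤ n ∧
        (x = aElt n k l ∨ x = bElt n k l)} = ⊤) ∧
    (∀ m : ℕ, 2 ≤ m →
      Tsub S m = Subgroup.closure {x : VP (m + 1) | ∃ k l : ℕ, 1 ≤ k ∧ 1 ≤ l ∧
        k + l = m + 1 ∧ (x = aElt (m + 1) k l ∨ x = bElt (m + 1) k l)}) := by
  refine ⟨fun n _ => closure_cabled_eq_top n, fun m hm => ?_⟩
  obtain ⟨m, rfl⟩ : ∃ m', m = m' + 1 := ⟨m - 1, by omega⟩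
  exact Tsub_eq_closure hS m

end Paper
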